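/- Let W ⊂ B(H) be a continuous von Neumann algebra and e ∈ W a projection. Then every TRO homomorphism from the TRO eW = {ex : x ∈ W} into ℂ is identically zero; that is, eW does not admit a nonzero TRO homomorphism onto ℂ. -/

import Mathlib

open ContinuousLinearMap

noncomputable section

variable {H : Type} [NormedAddCommGroup H] [InnerProductSpace ℂ H] [CompleteSpace H]

/-- The ternary product `x y* z` of bounded operators. -/
def tri (x y z : H →L[ℂ] H) : H →L[ℂ] H := x ∘L (adjoint y) ∘L z

/-- A projection in `B(H)`. -/
def IsProjection (p : H →L[ℂ] H) : Prop := IsSelfAdjoint p ∧ p * p = p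

/-- A von Neumann algebra is continuous if it contains no nonzero abelian projection,
i.e. no nonzero projection `p` with `pWp` commutative. -/
def IsContinuousVNA (W : VonNeumannAlgebra H) : Prop :=
  ∀ p : H →L[ℂ] H, p ∈ W → IsProjection p →
    (∀ x ∈ W, ∀ y ∈ W, (p * x * p) * (p * y * p) = (p * y * p) * (p * x * p)) → p = 0

/-- The TRO `eW = {e x : x ∈ W}` associated to a projection `e` in a
von Neumann algebra `W`. -/
def corner (W : VonNeumannAlgebra H) (e : H →L[ℂ] H) : Submodule ℂ (H →L[ℂ] H) :=
  (Subalgebra.toSubmodule W.toStarSubalgebra.toSubalgebra).map (LinearMap.mulLeft ℂ e)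

/-!
A partial isometry `v` of square zero satisfies `v = v v* v` and `v e* v = v v = 0`, so a ternary
homomorphism `f` with `f e ≠ 0` kills `v`, hence also `v v*`, and symmetrically `v* v`. It therefore
suffices to write `e = v v* + v* v` with such a `v ∈ W`.

If a corner `r W r` has no nonzero element of square zero, then its projections `p` commute with
every `y`, because `p y (r - p)` and `(r - p) y p` have square zero; projections span the corner
densely, so `r` is abelian. Continuity thus puts an element of square zero, and by polar
decomposition a partial isometry of square zero, into every nonzero corner below `e`. A maximal
family of such partial isometries with orthogonal supports sums strongly to the desired `v`.
-/

section StarRing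

variable {A : Type*} [NonUnitalRing A] [StarRing A]

theorem mul_eq_of_isSelfAdjoint {a b c : A} (ha : IsSelfAdjoint a) (hb : IsSelfAdjoint b)
    (hc : IsSelfAdjoint c) (h : a * b = c) : b * a = c := by
  simpa only [star_mul, ha.star_eq, hb.star_eq, hc.star_eq] using congr(star $h)

/-- A partial isometry whose initial and final projections are orthogonal, i.e. a partial isometry
of square zero; it implements an equivalence between two orthogonal projections. -/
structure IsSquareZeroPartialIsometry (v : A) : Prop where
  mul_star_mul_self : v * star v * v = v
  mul_self : v * v = 0

/-- The sum of the final and the initial projection of a partial isometry of square zero, that is,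
its smallest two-sided unit among the projections. -/
def support (v : A) : A := v * star v + star v * v

theorem support_star (v : A) : support (star v) = support v := by
  rw [support, support, star_star, add_comm]

namespace IsSquareZeroPartialIsometry

variable {u v e : A}

theorem star (hv : IsSquareZeroPartialIsometry v) : IsSquareZeroPartialIsometry (star v) where
  mul_star_mul_self := by
    simpa only [star_mul, star_star, mul_assoc] using congr(Star.star $hv.mul_star_mul_self)
  mul_self := by rw [← star_mul, hv.mul_self, star_zero]

theorem support_mul (hv : IsSquareZeroPartialIsometry v) : support v * v = v := by
  rw [support, add_mul, hv.mul_star_mul_self, mul_assoc, hv.mul_self, mul_zero, add_zero]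

theorem mul_support (hv : IsSquareZeroPartialIsometry v) : v * support v = v := by
  rw [support, mul_add, ← mul_assoc, ← mul_assoc, hv.mul_self, zero_mul, zero_add,
    hv.mul_star_mul_self]

theorem isStarProjection_support (hv : IsSquareZeroPartialIsometry v) :
    IsStarProjection (support v) := by
  refine ⟨?_, by simp [isSelfAdjoint_iff, support]⟩
  have hstar : support v * Star.star v = Star.star v := by
    simpa only [support_star] using hv.star.support_mul
  calc support v * support v = support v * v * Star.star v + support v * Star.star v * v := by
        rw [mul_assoc, mul_assoc, ← mul_add, ← support]
    _ = support v := by rw [hv.support_mul, hstar, support]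

theorem mul_support_eq_iff (he : IsSelfAdjoint e) (hv : IsSquareZeroPartialIsometry v) :
    e * support v = support v ↔ e * v = v ∧ v * e = v := by
  constructor
  · intro h
    have hsupp := hv.isStarProjection_support.isSelfAdjoint
    have h' : support v * e = support v := mul_eq_of_isSelfAdjoint he hsupp hsupp h
    constructor
    · rw [← hv.support_mul, ← mul_assoc, h]
    · rw [← hv.mul_support, mul_assoc, h']
  · rintro ⟨hev, hve⟩
    have hstar : e * Star.star v = Star.star v := by
      simpa only [star_mul, he.star_eq] using congr(Star.star $hve)
    rw [support, mul_add, ← mul_assoc, ← mul_assoc, hev, hstar]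

theorem mul_eq_zero_of_support_mul_support_eq_zero (hu : IsSquareZeroPartialIsometry u)
    (hv : IsSquareZeroPartialIsometry v) (huv : support u * support v = 0) : u * v = 0 := by
  rw [← hu.mul_support, ← hv.support_mul, mul_assoc, ← mul_assoc (support u), huv, zero_mul,
    mul_zero]

end IsSquareZeroPartialIsometry

end StarRing

section StarOrderedRing

variable {A : Type*} [Ring A] [StarRing A] [PartialOrder A] [StarOrderedRing A] [Algebra ℝ A]
  [StarModule ℝ A]

theorem add_sub_smul_mem_Icc {p m x : A} {ε : ℝ} (hp : IsStarProjection p) (hx : 0 ≤ x)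
    (hm : 0 ≤ m) (hmε : m ≤ algebraMap ℝ A ε) (hmx : m + x ≤ algebraMap ℝ A (2 * ε))
    (hpx : p * x = x) (hmp : m * p = ε • p) :
    m + x - ε • p ∈ Set.Icc 0 (algebraMap ℝ A ε) := by
  have hxp : x * p = x :=
    mul_eq_of_isSelfAdjoint hp.isSelfAdjoint hx.isSelfAdjoint hx.isSelfAdjoint hpx
  have hpm : p * m = ε • p :=
    mul_eq_of_isSelfAdjoint hm.isSelfAdjoint hp.isSelfAdjoint
      ((IsSelfAdjoint.all ε).smul hp.isSelfAdjoint) hmp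
  constructor
  · have hdecomp : m + x - ε • p = x + (1 - p) * m * (1 - p) := by
      simp only [mul_sub, sub_mul, mul_one, one_mul, hpm, smul_mul_assoc, hp.isIdempotentElem.eq,
        hmp]
      abel
    rw [hdecomp]
    exact add_nonneg hx (hp.one_sub.isSelfAdjoint.conjugate_nonneg hm)
  · have hdecomp : algebraMap ℝ A ε - (m + x - ε • p) =
        p * (algebraMap ℝ A (2 * ε) - (m + x)) * p +
          (1 - p) * (algebraMap ℝ A ε - m) * (1 - p) := by
      simp only [Algebra.algebraMap_eq_smul_one, mul_sub, sub_mul, mul_add, add_mul, mul_one,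
        one_mul, hpm, smul_mul_assoc, hp.isIdempotentElem.eq, hmp, mul_smul_comm, hpx, hxp,
        two_mul, add_smul, smul_sub, sub_self]
      abel
    rw [← sub_nonneg, hdecomp]
    exact add_nonneg (hp.isSelfAdjoint.conjugate_nonneg (sub_nonneg.2 hmx))
      (hp.one_sub.isSelfAdjoint.conjugate_nonneg (sub_nonneg.2 hmε))

end StarOrderedRing

section HasStrongSum

variable {𝕜 E ι : Type*} [Semiring 𝕜] [AddCommMonoid E] [Module 𝕜 E] [TopologicalSpace E]
  {w : ι → E →L[𝕜] E} {V V' : E →L[𝕜] E}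

/-- The family `w` is summable to `V` in the strong operator topology. -/
def HasStrongSum (w : ι → E →L[𝕜] E) (V : E →L[𝕜] E) : Prop :=
  ∀ ξ, HasSum (fun i => w i ξ) (V ξ)

namespace HasStrongSum

theorem mul_left (T : E →L[𝕜] E) (h : HasStrongSum w V) :
    HasStrongSum (fun i => T * w i) (T * V) :=
  fun ξ => T.hasSum (h ξ)

theorem mul_right (h : HasStrongSum w V) (T : E →L[𝕜] E) :
    HasStrongSum (fun i => w i * T) (V * T) :=
  fun ξ => h (T ξ)

theorem unique [T2Space E] (h : HasStrongSum w V) (h' : HasStrongSum w V') : V = V' :=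
  ContinuousLinearMap.ext fun ξ => (h ξ).unique (h' ξ)

theorem eq_single [T2Space E] {i : ι} (h : HasStrongSum w V) (hw : ∀ j, j ≠ i → w j = 0) :
    V = w i :=
  h.unique fun ξ => hasSum_single i fun j hj => by rw [hw j hj, zero_apply]

theorem eq_zero [T2Space E] (h : HasStrongSum w V) (hw : ∀ i, w i = 0) : V = 0 :=
  h.unique fun ξ => by simpa only [hw, zero_apply] using hasSum_zero

end HasStrongSum

end HasStrongSum

section OperatorAlgebra

variable {K : Type*} [NormedAddCommGroup K] [InnerProductSpace ℂ K] [CompleteSpace K]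
  {W : VonNeumannAlgebra K}

theorem mem_iff_forall_commute {x : K →L[ℂ] K} : x ∈ W ↔ ∀ y ∈ W.commutant, Commute y x := by
  conv_lhs => rw [← W.commutant_commutant, VonNeumannAlgebra.mem_commutant_iff]
  rfl

theorem real_smul_mem (c : ℝ) {x : K →L[ℂ] K} (hx : x ∈ W) : c • x ∈ W :=
  mem_iff_forall_commute.2 fun y hy => (mem_iff_forall_commute.1 hx y hy).smul_right c

theorem cfc_mem_vonNeumannAlgebra (f : ℝ → ℝ) {x : K →L[ℂ] K} (hx : x ∈ W) : cfc f x ∈ W :=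
  mem_iff_forall_commute.2 fun y hy => ((mem_iff_forall_commute.1 hx y hy).symm.cfc_real f).symm

theorem mem_span_nonneg_of_mem {x : K →L[ℂ] K} (hx : x ∈ W) :
    x ∈ Submodule.span ℂ {a | a ∈ W ∧ 0 ≤ a} := by
  have selfAdjoint {y : K →L[ℂ] K} (hy : y ∈ W) (hsa : IsSelfAdjoint y) :
      y ∈ Submodule.span ℂ {a | a ∈ W ∧ 0 ≤ a} := by
    have hnorm : algebraMap ℝ (K →L[ℂ] K) ‖y‖ ∈ W := by
      rw [Algebra.algebraMap_eq_smul_one]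
      exact real_smul_mem _ (one_mem W)
    rw [← add_sub_cancel_right y (algebraMap ℝ _ ‖y‖)]
    refine sub_mem (Submodule.subset_span ⟨add_mem hy hnorm, ?_⟩)
      (Submodule.subset_span ⟨hnorm, algebraMap_nonneg _ (norm_nonneg y)⟩)
    exact neg_le_iff_add_nonneg.1 hsa.neg_algebraMap_norm_le_self
  rw [← realPart_add_I_smul_imaginaryPart x]
  have hre : (realPart x : K →L[ℂ] K) ∈ W := by
    rw [realPart_apply_coe]
    exact real_smul_mem _ (add_mem hx (star_mem hx))
  have him : (imaginaryPart x : K →L[ℂ] K) ∈ W := by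
    rw [imaginaryPart_apply_coe]
    exact W.smul_mem (real_smul_mem _ (sub_mem hx (star_mem hx))) _
  exact add_mem (selfAdjoint hre (realPart x).2)
    (Submodule.smul_mem _ _ (selfAdjoint him (imaginaryPart x).2))

/-- The range projection of `g`: the orthogonal projection onto the closure of its range. -/
def rangeProj (g : K →L[ℂ] K) : K →L[ℂ] K :=
  g.range.topologicalClosure.starProjection

theorem isStarProjection_rangeProj (g : K →L[ℂ] K) : IsStarProjection (rangeProj g) :=
  isStarProjection_starProjection

theorem rangeProj_mul_self (g : K →L[ℂ] K) : rangeProj g * g = g := by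
  ext ξ
  exact Submodule.starProjection_eq_self_iff.2 (Submodule.le_topologicalClosure _ ⟨ξ, rfl⟩)

theorem mul_rangeProj_congr {S T g : K →L[ℂ] K} (h : S * g = T * g) :
    S * rangeProj g = T * rangeProj g := by
  have hrange : Set.EqOn S T g.range := by
    rintro _ ⟨ξ, rfl⟩
    exact congr($h ξ)
  ext ξ
  exact hrange.closure S.continuous T.continuous
    (Submodule.starProjection_apply_mem g.range.topologicalClosure ξ)

theorem commute_rangeProj {y g : K →L[ℂ] K} (hy : Commute y g) (hy' : Commute (star y) g) :
    Commute y (rangeProj g) := by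
  have hP := (isStarProjection_rangeProj g).isSelfAdjoint.star_eq
  have invariant {u : K →L[ℂ] K} (hu : Commute u g) :
      rangeProj g * u * rangeProj g = u * rangeProj g :=
    mul_rangeProj_congr (by rw [mul_assoc, hu.eq, ← mul_assoc, rangeProj_mul_self])
  have hstar : rangeProj g * y * rangeProj g = rangeProj g * y := by
    simpa only [star_mul, star_star, hP, mul_assoc] using congr(star $(invariant hy'))
  exact (invariant hy).symm.trans hstar

theorem rangeProj_mem {g : K →L[ℂ] K} (hg : g ∈ W) : rangeProj g ∈ W :=
  mem_iff_forall_commute.2 fun y hy =>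
    commute_rangeProj (mem_iff_forall_commute.1 hg y hy)
      (mem_iff_forall_commute.1 hg _ (star_mem hy))

/-- The spectral projection `χ_(ε, ∞)(a)` of a self-adjoint operator `a`, encoded as the range
projection of `(a - ε)⁺` because no Borel functional calculus is available. -/
def spectralProj (a : K →L[ℂ] K) (ε : ℝ) : K →L[ℂ] K :=
  rangeProj (cfc (fun t : ℝ => max (t - ε) 0) a)

theorem isStarProjection_spectralProj (a : K →L[ℂ] K) (ε : ℝ) :
    IsStarProjection (spectralProj a ε) :=
  isStarProjection_rangeProj _

theorem spectralProj_mem {a : K →L[ℂ] K} (ha : a ∈ W) (ε : ℝ) : spectralProj a ε ∈ W :=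
  rangeProj_mem (cfc_mem_vonNeumannAlgebra _ ha)

theorem spectralProj_mul_cfc (a : K →L[ℂ] K) (ε : ℝ) :
    spectralProj a ε * cfc (fun t : ℝ => max (t - ε) 0) a = cfc (fun t : ℝ => max (t - ε) 0) a :=
  rangeProj_mul_self _

theorem cfc_mul_spectralProj_congr {a : K →L[ℂ] K} {ε : ℝ} {f g : ℝ → ℝ}
    (hf : ContinuousOn f (spectrum ℝ a)) (hg : ContinuousOn g (spectrum ℝ a))
    (hfg : ∀ t, ε < t → f t = g t) :
    cfc f a * spectralProj a ε = cfc g a * spectralProj a ε := by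
  refine mul_rangeProj_congr ?_
  rw [← cfc_mul f _ a, ← cfc_mul g _ a]
  congr 1
  ext t
  rcases le_or_gt t ε with ht | ht
  · simp only [max_eq_right (sub_nonpos.2 ht), mul_zero]
  · rw [hfg t ht]

theorem mul_spectralProj_congr {S T a : K →L[ℂ] K} (ha : IsSelfAdjoint a) {ε : ℝ} (hε : 0 < ε)
    (h : S * a = T * a) : S * spectralProj a ε = T * spectralProj a ε := by
  have hdiv : cfc (fun t : ℝ => max (t - ε) 0) a =
      a * cfc (fun t : ℝ => max (t - ε) 0 / max t ε) a := by
    have hcont : Continuous fun t : ℝ => max (t - ε) 0 / max t ε :=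
      .div (by fun_prop) (by fun_prop) fun t => (lt_max_of_lt_right hε).ne'
    conv_rhs => enter [1]; rw [← cfc_id' ℝ a]
    rw [← cfc_mul _ _ a (by fun_prop) hcont.continuousOn]
    congr 1
    ext t
    rcases le_or_gt t ε with ht | ht
    · simp only [max_eq_right (sub_nonpos.2 ht), zero_div, mul_zero]
    · rw [max_eq_left ht.le, mul_div_cancel₀ _ (hε.trans ht).ne']
  refine mul_rangeProj_congr ?_
  rw [hdiv, ← mul_assoc, h, mul_assoc]

theorem cfc_min_add_cfc_max {a : K →L[ℂ] K} (ha : IsSelfAdjoint a) (ε : ℝ) :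
    cfc (fun t : ℝ => min t ε) a + cfc (fun t : ℝ => max (t - ε) 0) a = a := by
  rw [← cfc_add ..]
  conv_rhs => rw [← cfc_id' ℝ a]
  congr 1
  ext t
  rcases le_total t ε with ht | ht <;> simp [ht]

theorem norm_le_of_spectralProj_eq_zero {a : K →L[ℂ] K} (ha : 0 ≤ a) {ε : ℝ} (hε : 0 ≤ ε)
    (h : spectralProj a ε = 0) : ‖a‖ ≤ ε := by
  have hmax : cfc (fun t : ℝ => max (t - ε) 0) a = 0 := by
    rw [← spectralProj_mul_cfc, h, zero_mul]
  rw [CStarAlgebra.norm_le_iff_le_algebraMap a hε ha, ← cfc_min_add_cfc_max ha.isSelfAdjoint ε,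
    hmax, add_zero]
  exact cfc_le_algebraMap _ _ _ fun t _ => min_le_right t ε

theorem sub_smul_spectralProj_mem_Icc {a : K →L[ℂ] K} {ε : ℝ} (hε : 0 ≤ ε) (ha : 0 ≤ a)
    (haε : a ≤ algebraMap ℝ (K →L[ℂ] K) (2 * ε)) :
    a - ε • spectralProj a ε ∈ Set.Icc 0 (algebraMap ℝ (K →L[ℂ] K) ε) := by
  have hma := cfc_min_add_cfc_max ha.isSelfAdjoint ε
  have hm : 0 ≤ cfc (fun t : ℝ => min t ε) a :=
    cfc_nonneg fun t ht => le_min (spectrum_nonneg_of_nonneg ha ht) hε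
  have hmε : cfc (fun t : ℝ => min t ε) a ≤ algebraMap ℝ _ ε :=
    cfc_le_algebraMap _ _ _ fun t _ => min_le_right t ε
  have hmp : cfc (fun t : ℝ => min t ε) a * spectralProj a ε = ε • spectralProj a ε := by
    rw [cfc_mul_spectralProj_congr (g := fun _ => ε) (by fun_prop) (by fun_prop)
      fun t ht => min_eq_right ht.le, cfc_const ε a, Algebra.algebraMap_eq_smul_one,
      smul_one_mul]
  have hx : 0 ≤ cfc (fun t : ℝ => max (t - ε) 0) a := cfc_nonneg fun t _ => le_max_right _ _
  simpa only [hma] using add_sub_smul_mem_Icc (isStarProjection_spectralProj a ε) hx hm hmε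
    (hma.trans_le haε) (spectralProj_mul_cfc a ε) hmp

theorem exists_mem_span_isStarProjection_sub_mem_Icc {r : K →L[ℂ] K} (n : ℕ) {a : K →L[ℂ] K}
    {c : ℝ} (haW : a ∈ W) (hra : r * a = a) (ha : 0 ≤ a) (hc : 0 < c)
    (hac : a ≤ algebraMap ℝ (K →L[ℂ] K) c) :
    ∃ s ∈ Submodule.span ℝ {p | p ∈ W ∧ IsStarProjection p ∧ r * p = p},
      a - s ∈ Set.Icc 0 (algebraMap ℝ (K →L[ℂ] K) (c / 2 ^ n)) := by
  induction n generalizing a c with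
  | zero => exact ⟨0, zero_mem _, by simpa using ⟨ha, hac⟩⟩
  | succ n ih =>
    -- Subtracting `(c / 2) • χ_(c/2, ∞)(a)` from `a` halves the bound.
    set p := spectralProj a (c / 2)
    have hrp : r * p = p := by
      simpa using mul_spectralProj_congr (T := 1) ha.isSelfAdjoint (half_pos hc)
        (by simpa using hra)
    have hpW : p ∈ W := spectralProj_mem haW _
    obtain ⟨hnonneg, hle⟩ := sub_smul_spectralProj_mem_Icc (half_pos hc).le ha
      (by rwa [mul_div_cancel₀ c two_ne_zero])
    obtain ⟨s, hs, hsub⟩ := ih (sub_mem haW (real_smul_mem _ hpW))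
      (by rw [mul_sub, hra, mul_smul_comm, hrp]) hnonneg (half_pos hc) hle
    refine ⟨(c / 2) • p + s, add_mem (Submodule.smul_mem _ _ (Submodule.subset_span
      ⟨hpW, isStarProjection_spectralProj a _, hrp⟩)) hs, ?_⟩
    rwa [← sub_sub, pow_succ', ← div_div]

theorem mem_topologicalClosure_span_isStarProjection {r a : K →L[ℂ] K} (haW : a ∈ W)
    (hra : r * a = a) (ha : 0 ≤ a) :
    a ∈ (Submodule.span ℝ {p | p ∈ W ∧ IsStarProjection p ∧ r * p = p}).topologicalClosure := by
  set c := ‖a‖ + 1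
  have hc : 0 < c := by positivity
  have hac : a ≤ algebraMap ℝ (K →L[ℂ] K) c :=
    ha.isSelfAdjoint.le_algebraMap_norm_self.trans
      (algebraMap_mono _ (le_add_of_nonneg_right one_pos.le))
  choose s hs hsub using fun n : ℕ =>
    exists_mem_span_isStarProjection_sub_mem_Icc n haW hra ha hc hac
  refine mem_closure_of_tendsto (b := Filter.atTop) (f := s) ?_ (.of_forall hs)
  have hlim : Filter.Tendsto (fun n : ℕ => c / 2 ^ n) Filter.atTop (nhds 0) :=
    tendsto_const_nhds.div_atTop (tendsto_pow_atTop_atTop_of_one_lt one_lt_two)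
  rw [tendsto_iff_norm_sub_tendsto_zero]
  refine squeeze_zero (fun n => norm_nonneg _) (fun n => ?_) hlim
  rw [norm_sub_rev]
  exact (CStarAlgebra.norm_le_iff_le_algebraMap _ (by positivity) (hsub n).1).2 (hsub n).2

theorem exists_isSelfAdjoint_mul_mul_mul_spectralProj {b : K →L[ℂ] K} (hbW : b ∈ W)
    (hb : IsSelfAdjoint b) {ε : ℝ} (hε : 0 < ε) :
    ∃ h ∈ W, IsSelfAdjoint h ∧ h * b * h * spectralProj b ε = spectralProj b ε := by
  have hcont : Continuous fun t : ℝ => (√(max t ε))⁻¹ :=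
    .inv₀ (by fun_prop) fun t => (Real.sqrt_pos.2 (lt_max_of_lt_right hε)).ne'
  refine ⟨cfc (fun t : ℝ => (√(max t ε))⁻¹) b, cfc_mem_vonNeumannAlgebra _ hbW,
    cfc_predicate _ b, ?_⟩
  conv_lhs => enter [1, 1, 2]; rw [← cfc_id' ℝ b]
  rw [← cfc_mul _ _ b hcont.continuousOn (by fun_prop),
    ← cfc_mul _ _ b (by fun_prop) hcont.continuousOn,
    cfc_mul_spectralProj_congr (g := fun _ => 1) (by fun_prop) (by fun_prop), cfc_const_one ℝ b,
    one_mul]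
  intro t ht
  rw [max_eq_left ht.le, mul_right_comm, ← mul_inv, Real.mul_self_sqrt (hε.trans ht).le,
    inv_mul_cancel₀ (hε.trans ht).ne']

-- `w` is a cut-off of the polar part of `z`, which avoids the polar decomposition of `z` itself.
theorem exists_isSquareZeroPartialIsometry_of_mul_self_eq_zero {r z : K →L[ℂ] K} (hzW : z ∈ W)
    (hz : z ≠ 0) (hzz : z * z = 0) (hrz : r * z = z) (hzr : z * r = z) :
    ∃ w ∈ W, IsSquareZeroPartialIsometry w ∧ w ≠ 0 ∧ r * w = w ∧ w * r = w := by
  set b := star z * z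
  have hb : IsSelfAdjoint b := .star_mul_self z
  have hbW : b ∈ W := mul_mem (star_mem hzW) hzW
  have hbnorm : 0 < ‖b‖ := norm_pos_iff.2 ((CStarRing.star_mul_self_ne_zero_iff z).2 hz)
  set ε := ‖b‖ / 2
  have hε : 0 < ε := half_pos hbnorm
  set q := spectralProj b ε
  have hq : IsStarProjection q := isStarProjection_spectralProj b ε
  have hqz : q * z = 0 := by
    have : star z * q = 0 := by
      simpa using mul_spectralProj_congr (S := star z) (T := 0) hb hε
        (by rw [← mul_assoc, ← star_mul, hzz, star_zero, zero_mul, zero_mul])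
    simpa [hq.isSelfAdjoint.star_eq] using congr(star $this)
  have hqr : q * r = q := by
    have : star r * q = q := by
      simpa using mul_spectralProj_congr (S := star r) (T := 1) hb hε
        (by rw [← mul_assoc, ← star_mul, hzr, one_mul])
    simpa [hq.isSelfAdjoint.star_eq] using congr(star $this)
  have hq0 : q ≠ 0 := fun hq0 =>
    (norm_le_of_spectralProj_eq_zero (star_mul_self_nonneg z) hε.le hq0).not_gt
      (half_lt_self hbnorm)
  obtain ⟨h, hhW, hh, hhb⟩ := exists_isSelfAdjoint_mul_mul_mul_spectralProj hbW hb hε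
  set w := z * h * q
  have hww : star w * w = q :=
    calc star w * w = q * (h * b * h * q) := by
          simp only [w, b, star_mul, hh.star_eq, hq.isSelfAdjoint.star_eq, mul_assoc]
      _ = q := by rw [hhb, hq.isIdempotentElem.eq]
  have hw : IsSquareZeroPartialIsometry w :=
    ⟨by rw [mul_assoc, hww, mul_assoc, hq.isIdempotentElem.eq],
      by simp only [w, mul_assoc, ← mul_assoc q z, hqz, zero_mul, mul_zero]⟩
  exact ⟨w, mul_mem (mul_mem hzW hhW) (spectralProj_mem hbW ε), hw,
    fun hw0 => hq0 (by rw [← hww, hw0, mul_zero]), by simp only [w, ← mul_assoc, hrz],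
    by rw [mul_assoc, hqr]⟩

theorem commute_isStarProjection_of_forall_mul_self_eq_zero {r p y : K →L[ℂ] K}
    (hr : IsStarProjection r) (hrW : r ∈ W)
    (hzero : ∀ z ∈ W, z * z = 0 → r * z = z → z * r = z → z = 0)
    (hp : IsStarProjection p) (hpW : p ∈ W) (hrp : r * p = p)
    (hyW : y ∈ W) (hry : r * y = y) (hyr : y * r = y) : Commute p y := by
  have hpr : p * r = p :=
    mul_eq_of_isSelfAdjoint hr.isSelfAdjoint hp.isSelfAdjoint hp.isSelfAdjoint hrp
  have hcross : p * (r - p) = 0 ∧ (r - p) * p = 0 := by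
    simp [mul_sub, sub_mul, hpr, hrp, hp.isIdempotentElem.eq]
  have hleft : p * y * (r - p) = 0 := by
    refine hzero _ (mul_mem (mul_mem hpW hyW) (sub_mem hrW hpW)) ?_ ?_ ?_
    · rw [mul_assoc, ← mul_assoc (r - p), ← mul_assoc (r - p), hcross.2, zero_mul, zero_mul,
        mul_zero]
    · rw [← mul_assoc, ← mul_assoc, hrp]
    · rw [mul_assoc, sub_mul, hr.isIdempotentElem.eq, hpr]
  have hright : (r - p) * y * p = 0 := by
    refine hzero _ (mul_mem (mul_mem (sub_mem hrW hpW) hyW) hpW) ?_ ?_ ?_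
    · rw [mul_assoc, ← mul_assoc p, ← mul_assoc p, hcross.1, zero_mul, zero_mul, mul_zero]
    · rw [← mul_assoc, ← mul_assoc, mul_sub, hr.isIdempotentElem.eq, hrp]
    · rw [mul_assoc, hpr]
  calc p * y = p * y * p := by rwa [mul_sub, mul_assoc p y r, hyr, sub_eq_zero] at hleft
    _ = y * p := by rwa [sub_mul, sub_mul, hry, sub_eq_zero, eq_comm] at hright

theorem commute_of_nonneg_of_forall_isStarProjection {r a y : K →L[ℂ] K}
    (hy : ∀ p ∈ W, IsStarProjection p → r * p = p → Commute p y) (haW : a ∈ W) (hra : r * a = a)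
    (ha : 0 ≤ a) : Commute a y := by
  have hclosed : IsClosed {x : K →L[ℂ] K | Commute x y} :=
    isClosed_eq (continuous_mul_const y) (continuous_const_mul y)
  refine closure_minimal (fun x hx => ?_) hclosed
    (mem_topologicalClosure_span_isStarProjection haW hra ha)
  induction hx using Submodule.span_induction with
  | mem p hp => exact hy p hp.1 hp.2.1 hp.2.2
  | zero => exact Commute.zero_left y
  | add x₁ x₂ _ _ h₁ h₂ => exact h₁.add_left h₂
  | smul c x _ h => exact h.smul_left c

theorem commute_of_forall_mul_self_eq_zero {r x y : K →L[ℂ] K} (hr : IsStarProjection r)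
    (hrW : r ∈ W) (hzero : ∀ z ∈ W, z * z = 0 → r * z = z → z * r = z → z = 0)
    (hx : x ∈ W) (hy : y ∈ W) : Commute (r * x * r) (r * y * r) := by
  have hcorner (u : K →L[ℂ] K) : r * (r * u * r) = r * u * r ∧ r * u * r * r = r * u * r :=
    ⟨by simp only [← mul_assoc, hr.isIdempotentElem.eq], by rw [mul_assoc, hr.isIdempotentElem.eq]⟩
  replace hx := mem_span_nonneg_of_mem hx
  induction hx using Submodule.span_induction with
  | mem a ha =>
    refine commute_of_nonneg_of_forall_isStarProjection (fun p hpW hp hrp => ?_)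
      (mul_mem (mul_mem hrW ha.1) hrW) (hcorner a).1 (hr.isSelfAdjoint.conjugate_nonneg ha.2)
    exact commute_isStarProjection_of_forall_mul_self_eq_zero hr hrW hzero hp hpW hrp
      (mul_mem (mul_mem hrW hy) hrW) (hcorner y).1 (hcorner y).2
  | zero => simp
  | add x₁ x₂ _ _ h₁ h₂ => simpa only [mul_add, add_mul] using h₁.add_left h₂
  | smul c x _ h => simpa only [mul_smul_comm, smul_mul_assoc] using h.smul_left c

/-- The relative version of continuity for the corner of `W` at a projection `e`: it contains no
nonzero abelian projection. -/
def IsContinuousProj (W : VonNeumannAlgebra K) (e : K →L[ℂ] K) : Prop :=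
  ∀ p ∈ W, IsStarProjection p → e * p = p →
    (∀ x ∈ W, ∀ y ∈ W, Commute (p * x * p) (p * y * p)) → p = 0

theorem IsContinuousProj.exists_isSquareZeroPartialIsometry {e r : K →L[ℂ] K}
    (he : IsContinuousProj W e) (hrW : r ∈ W) (hr : IsStarProjection r) (her : e * r = r)
    (hr0 : r ≠ 0) : ∃ w ∈ W, IsSquareZeroPartialIsometry w ∧ w ≠ 0 ∧ r * w = w ∧ w * r = w := by
  obtain ⟨z, hzW, hzz, hrz, hzr, hz⟩ :
      ∃ z ∈ W, z * z = 0 ∧ r * z = z ∧ z * r = z ∧ z ≠ 0 := by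
    by_contra! hzero
    exact hr0 (he r hrW hr her fun x hx y hy =>
      commute_of_forall_mul_self_eq_zero hr hrW hzero hx hy)
  exact exists_isSquareZeroPartialIsometry_of_mul_self_eq_zero hzW hz hzz hrz hzr

section StrongSum

variable {ι : Type*} {w : ι → K →L[ℂ] K} {V : K →L[ℂ] K}

theorem HasStrongSum.mem_vonNeumannAlgebra (h : HasStrongSum w V) (hw : ∀ i, w i ∈ W) : V ∈ W :=
  mem_iff_forall_commute.2 fun y hy => (h.mul_left y).unique <| by
    simpa only [(mem_iff_forall_commute.1 (hw _) y hy).eq] using h.mul_right y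

theorem sum_star_mul_self_le_one (hw : ∀ i, w i * star (w i) * w i = w i)
    (hinit : Pairwise fun i j => w i * star (w j) = 0) (s : Finset ι) :
    ∑ i ∈ s, star (w i) * w i ≤ 1 := by
  have hidem : OrthogonalIdempotents fun i => star (w i) * w i :=
    ⟨fun i => by rw [IsIdempotentElem, mul_assoc, ← mul_assoc (w i), hw],
      fun i j hij => by simp only [mul_assoc, ← mul_assoc (w i), hinit hij, zero_mul, mul_zero]⟩
  exact IsStarProjection.le_one
    ⟨hidem.isIdempotentElem_sum, isSelfAdjoint_sum s fun i _ => .star_mul_self (w i)⟩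

theorem sum_norm_sq_apply_le (hw : ∀ i, w i * star (w i) * w i = w i)
    (hinit : Pairwise fun i j => w i * star (w j) = 0) (s : Finset ι) (ξ : K) :
    ∑ i ∈ s, ‖w i ξ‖ ^ 2 ≤ ‖ξ‖ ^ 2 := by
  have hpos := (sum_star_mul_self_le_one hw hinit s).re_inner_nonneg_left ξ
  rw [sub_apply, inner_sub_left, map_sub, sub_nonneg, one_apply_eq_self,
    inner_self_eq_norm_sq] at hpos
  calc ∑ i ∈ s, ‖w i ξ‖ ^ 2 = RCLike.re (inner ℂ ((∑ i ∈ s, star (w i) * w i) ξ) ξ) := by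
        simp only [ContinuousLinearMap.apply_norm_sq_eq_inner_adjoint_left, sum_apply, sum_inner,
          map_sum]
        rfl
    _ ≤ ‖ξ‖ ^ 2 := hpos

theorem exists_hasStrongSum (hw : ∀ i, w i * star (w i) * w i = w i)
    (hinit : Pairwise fun i j => w i * star (w j) = 0)
    (hfinal : Pairwise fun i j => star (w i) * w j = 0) : ∃ V, HasStrongSum w V := by
  have horth : OrthogonalFamily ℂ (fun i => (w i).range) fun i => (w i).range.subtypeₗᵢ := by
    rintro i j hij ⟨_, ξ, rfl⟩ ⟨_, η, rfl⟩
    have : adjoint (w i) (w j η) = 0 := congr($(hfinal hij) η)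
    simpa using (adjoint_inner_right (w i) ξ (w j η)).symm.trans (by rw [this, inner_zero_right])
  have hsummable (ξ : K) : Summable fun i => w i ξ :=
    (horth.summable_iff_norm_sq_summable fun i => ⟨w i ξ, ξ, rfl⟩).2
      (summable_of_sum_le (fun i => sq_nonneg _) fun s => sum_norm_sq_apply_le hw hinit s ξ)
  have hbound (ξ : K) : ‖∑' i, w i ξ‖ ≤ 1 * ‖ξ‖ := by
    refine le_of_tendsto (hsummable ξ).hasSum.norm (.of_forall fun s => ?_)
    rw [one_mul, ← sq_le_sq₀ (norm_nonneg _) (norm_nonneg _)]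
    exact (horth.norm_sum (fun i => ⟨w i ξ, ξ, rfl⟩) s).trans_le (sum_norm_sq_apply_le hw hinit s ξ)
  refine ⟨LinearMap.mkContinuous
    { toFun := fun ξ => ∑' i, w i ξ
      map_add' := fun ξ η => by simp only [map_add, (hsummable ξ).tsum_add (hsummable η)]
      map_smul' := fun c ξ => by simp only [map_smul, RingHom.id_apply, tsum_const_smul''] }
    1 hbound, fun ξ => (hsummable ξ).hasSum⟩

end StrongSum

section Exhaustion

variable {ι : Type*} {w : ι → K →L[ℂ] K} {V : K →L[ℂ] K}

theorem HasStrongSum.star_term_mul (h : HasStrongSum w V)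
    (hfinal : Pairwise fun i j => star (w i) * w j = 0) (i : ι) :
    star (w i) * V = star (w i) * w i :=
  (h.mul_left (star (w i))).eq_single fun _ hij => hfinal hij.symm

theorem HasStrongSum.mul_star_term (h : HasStrongSum w V)
    (hinit : Pairwise fun i j => w i * star (w j) = 0) (i : ι) :
    V * star (w i) = w i * star (w i) :=
  (h.mul_right (star (w i))).eq_single fun _ hij => hinit hij

theorem HasStrongSum.isSquareZeroPartialIsometry_and_support_mul (h : HasStrongSum w V)
    (hw : ∀ i, w i * star (w i) * w i = w i) (hmul : ∀ i j, w i * w j = 0)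
    (hinit : Pairwise fun i j => w i * star (w j) = 0)
    (hfinal : Pairwise fun i j => star (w i) * w j = 0) :
    IsSquareZeroPartialIsometry V ∧ ∀ i, support V * support (w i) = support (w i) := by
  have hVw (i : ι) : V * w i = 0 := (h.mul_right (w i)).eq_zero fun j => hmul j i
  have hVstarw (i : ι) : star V * w i = star (w i) * w i := by
    simpa only [star_mul, star_star] using congr(star $(h.star_term_mul hfinal i))
  have hstarVstarw (i : ι) : star V * star (w i) = 0 := by
    rw [← star_mul, (h.mul_left (w i)).eq_zero (hmul i), star_zero]
  have hVinit (i : ι) : V * (star (w i) * w i) = w i := by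
    rw [← mul_assoc, h.mul_star_term hinit, hw]
  refine ⟨⟨?_, (h.mul_left V).eq_zero hVw⟩, fun i => ?_⟩
  · exact (h.mul_left (V * star V)).unique (by simpa only [mul_assoc, hVstarw, hVinit] using h)
  calc support V * support (w i)
      = V * (star V * w i) * star (w i) + V * (star V * star (w i)) * w i
        + (star V * (V * w i) * star (w i) + star V * (V * (star (w i) * w i))) := by
        simp only [support, mul_add, add_mul, mul_assoc]
        abel
    _ = support (w i) := by
        simp only [hVstarw, hVinit, hVw, hstarVstarw, mul_zero, zero_mul, add_zero, zero_add,
          support]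

theorem exists_isSquareZeroPartialIsometry_support_mul {e : K →L[ℂ] K} (he : IsSelfAdjoint e)
    (hwW : ∀ i, w i ∈ W) (hw : ∀ i, IsSquareZeroPartialIsometry (w i))
    (hsupp : Pairwise fun i j => support (w i) * support (w j) = 0)
    (hew : ∀ i, e * support (w i) = support (w i)) :
    ∃ v ∈ W, IsSquareZeroPartialIsometry v ∧ e * support v = support v ∧
      ∀ i, support v * support (w i) = support (w i) := by
  have hinit : Pairwise fun i j => w i * star (w j) = 0 := fun i j hij =>
    (hw i).mul_eq_zero_of_support_mul_support_eq_zero (hw j).star (by rw [support_star, hsupp hij])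
  have hfinal : Pairwise fun i j => star (w i) * w j = 0 := fun i j hij =>
    (hw i).star.mul_eq_zero_of_support_mul_support_eq_zero (hw j) (by rw [support_star, hsupp hij])
  have hmul (i j : ι) : w i * w j = 0 := by
    rcases eq_or_ne i j with rfl | hij
    · exact (hw i).mul_self
    · exact (hw i).mul_eq_zero_of_support_mul_support_eq_zero (hw j) (hsupp hij)
  have hunit (i : ι) : e * w i = w i ∧ w i * e = w i := ((hw i).mul_support_eq_iff he).1 (hew i)
  obtain ⟨v, hv⟩ := exists_hasStrongSum (fun i => (hw i).mul_star_mul_self) hinit hfinal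
  obtain ⟨hvsz, hvsupp⟩ := hv.isSquareZeroPartialIsometry_and_support_mul
    (fun i => (hw i).mul_star_mul_self) hmul hinit hfinal
  have hev : e * v = v := (hv.mul_left e).unique (by simpa only [(hunit _).1] using hv)
  have hve : v * e = v := (hv.mul_right e).unique (by simpa only [(hunit _).2] using hv)
  exact ⟨v, hv.mem_vonNeumannAlgebra hwW, hvsz, (hvsz.mul_support_eq_iff he).2 ⟨hev, hve⟩, hvsupp⟩

theorem exists_maximal_pairwise_support_mul_eq_zero (W : VonNeumannAlgebra K) (e : K →L[ℂ] K) :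
    ∃ S : Set (K →L[ℂ] K), Maximal (fun S =>
      (∀ w ∈ S, w ∈ W ∧ IsSquareZeroPartialIsometry w ∧ e * support w = support w) ∧
        S.Pairwise fun u w => support u * support w = 0) S := by
  refine zorn_subset {S : Set (K →L[ℂ] K) |
    (∀ w ∈ S, w ∈ W ∧ IsSquareZeroPartialIsometry w ∧ e * support w = support w) ∧
      S.Pairwise fun u w => support u * support w = 0} fun C hC hchain =>
    ⟨⋃₀ C, ⟨?_, (Set.pairwise_sUnion hchain.directedOn).2 fun S hS => (hC hS).2⟩,
      fun S hS => Set.subset_sUnion_of_mem hS⟩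
  rintro w ⟨S, hS, hw⟩
  exact (hC hS).1 w hw

theorem IsContinuousProj.exists_support_eq {e : K →L[ℂ] K} (hcont : IsContinuousProj W e)
    (heW : e ∈ W) (he : IsStarProjection e) :
    ∃ v ∈ W, IsSquareZeroPartialIsometry v ∧ support v = e := by
  obtain ⟨S, ⟨hS, hpair⟩, hmax⟩ := exists_maximal_pairwise_support_mul_eq_zero W e
  obtain ⟨v, hvW, hv, hev, hvS⟩ := exists_isSquareZeroPartialIsometry_support_mul
    (w := fun w : S => (w : K →L[ℂ] K)) he.isSelfAdjoint (fun w => (hS w w.2).1)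
    (fun w => (hS w w.2).2.1) (fun u w huw => hpair u.2 w.2 (Subtype.coe_ne_coe.2 huw))
    (fun w => (hS w w.2).2.2)
  refine ⟨v, hvW, hv, by_contra fun hne => ?_⟩
  set r := e - support v
  have hr : IsStarProjection r := hv.isStarProjection_support.sub_of_mul_eq_right he hev
  have hrW : r ∈ W :=
    sub_mem heW (add_mem (mul_mem hvW (star_mem hvW)) (mul_mem (star_mem hvW) hvW))
  have her : e * r = r := by rw [mul_sub, he.isIdempotentElem.eq, hev]
  obtain ⟨w, hwW, hw, hw0, hrw, hwr⟩ :=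
    hcont.exists_isSquareZeroPartialIsometry hrW hr her (sub_ne_zero.2 (Ne.symm hne))
  have hrsupp : r * support w = support w := (hw.mul_support_eq_iff hr.isSelfAdjoint).2 ⟨hrw, hwr⟩
  have hrS (u) (hu : u ∈ S) : r * support u = 0 := by
    rw [sub_mul, (hS u hu).2.2, hvS ⟨u, hu⟩, sub_self]
  have hSw (u) (hu : u ∈ S) : support w * support u = 0 ∧ support u * support w = 0 := by
    have hwsa := hw.isStarProjection_support.isSelfAdjoint
    have husa := (hS u hu).2.1.isStarProjection_support.isSelfAdjoint
    have huw : support u * support w = 0 := by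
      rw [← hrsupp, ← mul_assoc,
        mul_eq_of_isSelfAdjoint hr.isSelfAdjoint husa (.zero _) (hrS u hu), zero_mul]
    exact ⟨mul_eq_of_isSelfAdjoint husa hwsa (.zero _) huw, huw⟩
  have hwS : w ∈ S := hmax ⟨?_, ?_⟩ (Set.subset_insert w S) (Set.mem_insert w S)
  · have hsupp0 : support w = 0 := by rw [← hrsupp, hrS w hwS]
    exact hw0 (by rw [← hw.support_mul, hsupp0, zero_mul])
  · rintro u (rfl | hu)
    · exact ⟨hwW, hw, by rw [← hrsupp, ← mul_assoc, her]⟩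
    · exact hS u hu
  · exact hpair.insert fun u hu _ => hSw u hu

end Exhaustion

end OperatorAlgebra

section Corner

variable {W : VonNeumannAlgebra H} {e : H →L[ℂ] H}

theorem IsContinuousVNA.isContinuousProj (hW : IsContinuousVNA W) (e : H →L[ℂ] H) :
    IsContinuousProj W e :=
  fun p hpW hp _ hcomm => hW p hpW ⟨hp.isSelfAdjoint, hp.isIdempotentElem⟩ hcomm

variable {R : Type*} [NonUnitalNonAssocSemiring R] [StarAddMonoid R] {f : ↥(corner W e) →+ R}

/-- An additive map on the TRO `eW` that turns the ternary product `x y* z` into the ternary product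
of `R`; for `ℂ`-linear `f` and `R = ℂ` this is a TRO homomorphism. The membership proof is an
argument because `corner W e` is not known to be closed under `tri` unless `e` is a projection
in `W`. -/
def IsTernaryHom (f : ↥(corner W e) →+ R) : Prop :=
  ∀ (a b c : ↥(corner W e)) (h : tri (a : H →L[ℂ] H) b c ∈ corner W e),
    f ⟨tri (a : H →L[ℂ] H) b c, h⟩ = f a * star (f b) * f c

namespace IsTernaryHom

theorem map_eq (hf : IsTernaryHom f) {a b c d : ↥(corner W e)}
    (h : (a : H →L[ℂ] H) * star (b : H →L[ℂ] H) * c = d) : f d = f a * star (f b) * f c := by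
  have htri : tri (a : H →L[ℂ] H) b c = d := h
  rw [← hf a b c (htri ▸ d.2)]
  exact congr(f $(Subtype.ext htri.symm))

variable [NoZeroDivisors R] {unit : ↥(corner W e)}

theorem map_mul_star_self_eq_zero (hf : IsTernaryHom f) (he : IsSelfAdjoint e)
    (hunit : (unit : H →L[ℂ] H) = e) (hfunit : f unit ≠ 0) {u d : ↥(corner W e)}
    (hu : IsSquareZeroPartialIsometry (u : H →L[ℂ] H))
    (hsupp : e * support (u : H →L[ℂ] H) = support (u : H →L[ℂ] H))
    (hd : (u : H →L[ℂ] H) * star (u : H →L[ℂ] H) = d) : f d = 0 := by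
  obtain ⟨heu, hue⟩ := (hu.mul_support_eq_iff he).1 hsupp
  have hsq : f u * star (f unit) * f u = 0 := by
    rw [← hf.map_eq (d := 0), map_zero]
    rw [hunit, he.star_eq, hue, hu.mul_self, Submodule.coe_zero]
  have hfu : f u = 0 := by simpa [hfunit] using hsq
  have hstar : star (u : H →L[ℂ] H) * e = star (u : H →L[ℂ] H) := by
    simpa only [star_mul, he.star_eq] using congr(star $heu)
  rw [hf.map_eq (a := u) (b := u) (c := unit) (by rw [hunit, mul_assoc, hstar, hd]), hfu,
    zero_mul, zero_mul]

theorem map_unit_eq_zero (hf : IsTernaryHom f) (he : IsStarProjection e)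
    (hunit : (unit : H →L[ℂ] H) = e) {v : H →L[ℂ] H} (hvW : v ∈ W)
    (hv : IsSquareZeroPartialIsometry v) (hve : support v = e) : f unit = 0 := by
  by_contra hfunit
  have map_final {u : H →L[ℂ] H} (huW : u ∈ W) (hu : IsSquareZeroPartialIsometry u)
      (hue : support u = e) : ∃ h : u * star u ∈ corner W e, f ⟨u * star u, h⟩ = 0 := by
    have hsupp : e * support u = support u := by rw [hue, he.isIdempotentElem.eq]
    have heu : e * u = u := ((hu.mul_support_eq_iff he.isSelfAdjoint).1 hsupp).1
    have hmem : u * star u ∈ corner W e :=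
      ⟨u * star u, show u * star u ∈ W from mul_mem huW (star_mem huW),
        by rw [LinearMap.mulLeft_apply, ← mul_assoc, heu]⟩
    exact ⟨hmem, hf.map_mul_star_self_eq_zero (u := ⟨u, u, huW, heu⟩) he.isSelfAdjoint hunit hfunit
      hu hsupp rfl⟩
  obtain ⟨hfinal, hfinal0⟩ := map_final hvW hv hve
  obtain ⟨hinit, hinit0⟩ := map_final (star_mem hvW) hv.star (by rw [support_star, hve])
  have hsum : unit = ⟨v * star v, hfinal⟩ + ⟨star v * star (star v), hinit⟩ :=
    Subtype.ext (by simpa [hunit, support] using hve.symm)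
  exact hfunit (by rw [hsum, map_add, hfinal0, hinit0, add_zero])

end IsTernaryHom

end Corner

theorem tro_hom_corner_of_continuous_eq_zero_general (W : VonNeumannAlgebra H) (e : H →L[ℂ] H)
    (he : e ∈ W) (heProj : IsProjection e) (hcont : IsContinuousProj W e) {R : Type*}
    [NonUnitalNonAssocSemiring R] [NoZeroDivisors R] [StarAddMonoid R]
    (f : ↥(corner W e) →+ R)
    (hf : ∀ (a b c : ↥(corner W e)) (h : tri (a : H →L[ℂ] H) b c ∈ corner W e),
      f ⟨tri (a : H →L[ℂ] H) b c, h⟩ = f a * star (f b) * f c) :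
    f = 0 := by
  have heStar : IsStarProjection e := ⟨heProj.2, heProj.1⟩
  obtain ⟨v, hvW, hv, hve⟩ := hcont.exists_support_eq he heStar
  let unit : corner W e := ⟨e, e, he, heProj.2⟩
  have hunit : f unit = 0 := IsTernaryHom.map_unit_eq_zero hf heStar rfl hvW hv hve
  ext x
  have hx : (unit : H →L[ℂ] H) * star (unit : H →L[ℂ] H) * x = x := by
    obtain ⟨_, y, -, rfl⟩ := x
    simp only [unit, LinearMap.mulLeft_apply, heProj.1.star_eq, heProj.2, ← mul_assoc]
  rw [IsTernaryHom.map_eq hf hx, hunit, zero_mul, zero_mul, AddMonoidHom.zero_apply]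

/-- if `W` is a continuous von Neumann algebra and `e ∈ W` is a projection,
then every TRO homomorphism `eW → ℂ` is identically zero. -/
theorem tro_hom_corner_of_continuous_eq_zero
    (W : VonNeumannAlgebra H) (hW : IsContinuousVNA W)
    (e : H →L[ℂ] H) (he : e ∈ W) (heProj : IsProjection e)
    (f : ↥(corner W e) →ₗ[ℂ] ℂ)
    (hf : ∀ (a b c : ↥(corner W e)) (h : tri (a : H →L[ℂ] H) b c ∈ corner W e),
      f ⟨tri (a : H →L[ℂ] H) b c, h⟩ = f a * (starRingEnd ℂ) (f b) * f c) :
    f = 0 := by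
  exact LinearMap.toAddMonoidHom_injective (tro_hom_corner_of_continuous_eq_zero_general W e he
    heProj (hW.isContinuousProj e) f.toAddMonoidHom hf)
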